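/- Let p ≥ 1 and let V : ℤ → ℝ be p-periodic. Let λ_m < λ_n be real numbers such that [λ_m, λ_n] is a connected component of Σ (that is, [λ_m, λ_n] ⊆ Σ and there is ε > 0 with ((λ_m − ε, λ_m) ∪ (λ_n, λ_n + ε)) ∩ Σ = ∅). Suppose Θ̃ : ℂ → ℂ is complex-analytic on ℂ₊ ∪ U for some open set U ⊆ ℂ containing the real interval (λ_m, λ_n), maps ℂ₊ into ℂ₊, satisfies Re Θ̃(z) ∈ [−π, 0] and 2 cos(p Θ̃(z)) = Δ(z) for all z ∈ ℂ₊, and takes real values on (λ_m, λ_n). Then there exists a unique x* ∈ (λ_m, λ_n) with Θ̃''(x*) = 0, and moreover Θ̃'''(x*) ≠ 0. -/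

import Mathlib

/-!
On the band, `Θ` extends to a real analytic function that maps `ℂ₊` to itself, and the claim
combines two facts: `Θ''' > 0` on the band, and `Θ''` takes both signs there.

*Positivity of `Θ'''`* (`herglotz_third_deriv_pos`). Let `x` be a point of the band and
`c = Θ'(x)`, which is positive (`boundary_deriv_pos`). The function
`h(z) = 1 / (c (z - x)) - 1 / (Θ(z) - Θ(x))` is analytic at `x`, because the pole cancels. The term
`-1 / (Θ - Θ(x))` has nonnegative imaginary part, and the other one tends to zero in imaginary
part at the boundary away from `x` and at infinity, so `Im h ≥ 0` on `ℂ₊` by the maximum principle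
(`pole_removed_im_nonneg`). If `h` were constant, `Θ` would be a Möbius map onto `ℂ₊`,
contradicting the bound on `Re Θ` (`not_moebius`). Hence `h'(x) > 0`, and the Taylor expansion of
`h` turns this into `Θ'''(x) / 6 = c² h'(x) + (Θ''(x) / 2)² / c > 0`.

*Sign change of `Θ''`.* If `Θ'' ≥ 0` on the band, then `Θ'` is bounded near the left edge; if
`Θ'' ≤ 0`, near the right edge. Since `Δ'² = p² (4 - Δ²) Θ'²` on the band, and `Δ² = 4` at an
edge, a bounded `Θ'` gives `Δ' = 0` at this edge. The discriminant has only real zeros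
(`discriminant_real_rooted`), so Laguerre's inequality `Δ Δ'' < Δ'²` shows that `|Δ|` has a local
maximum at such an edge (`critical_no_escape`). But `|Δ| > 2` in the adjacent gap, because energies
with `|Δ| ≤ 2` have bounded Floquet solutions, whose truncations form a Weyl sequence
(`mem_spectrum_of_discriminant`).
-/

open scoped ENNReal Topology

/-- The one-step transfer matrix `[[z - V(n), -1], [1, 0]]`. -/
noncomputable def transferMatrix (V : ℤ → ℝ) (n : ℤ) (z : ℂ) : Matrix (Fin 2) (Fin 2) ℂ :=
  !![z - (V n : ℂ), -1; 1, 0]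

/-- The monodromy matrix `Φ(z) = T(p) ⋯ T(1)` of a `p`-periodic potential. -/
noncomputable def monodromyMatrix (p : ℕ) (V : ℤ → ℝ) (z : ℂ) : Matrix (Fin 2) (Fin 2) ℂ :=
  ((List.range p).map fun i => transferMatrix V ((p : ℤ) - i) z).prod

/-- The Floquet discriminant `Δ(z) = tr Φ(z)`. -/
noncomputable def floquetDiscriminant (p : ℕ) (V : ℤ → ℝ) (z : ℂ) : ℂ :=
  Matrix.trace (monodromyMatrix p V z)

/-! ### Self-maps of the upper half-plane at a real boundary point -/

/-- At a real boundary point where a function with nonnegative imaginary part on `ℂ₊` is analytic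
and real-valued, its derivative is a positive real number unless the function is locally
constant. -/
lemma boundary_deriv_pos (h : ℂ → ℂ) (x : ℝ) (ha : AnalyticAt ℂ h x) (h0 : (h x).im = 0)
    (him : ∀ᶠ z in 𝓝 (x : ℂ), 0 < z.im → 0 ≤ (h z).im)
    (hnc : ¬ ∀ᶠ z in 𝓝 (x : ℂ), h z = h x) :
    0 < (deriv h x).re ∧ (deriv h x).im = 0 := by
  have ha' : AnalyticAt ℂ (fun z => h z - h x) x := by fun_prop
  obtain ⟨n, g, hg, hg0, hev⟩ :=
    ha'.exists_eventuallyEq_pow_smul_nonzero_iff.2 (by simpa [sub_eq_zero] using hnc)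
  have hn : n ≠ 0 := by
    rintro rfl
    have := hev.self_of_nhds
    simp at this
    exact hg0 this.symm
  -- Along the ray with direction `ζ`, the leading term of the expansion dictates the sign.
  have key : ∀ ζ : ℂ, 0 < ζ.im → 0 ≤ (ζ ^ n * g x).im := by
    intro ζ hζ
    have ht : Filter.Tendsto (fun r : ℝ => (x : ℂ) + r * ζ) (𝓝[>] 0) (𝓝 (x : ℂ)) := by
      have : Continuous (fun r : ℝ => (x : ℂ) + r * ζ) := by fun_prop
      simpa using (this.tendsto 0).mono_left nhdsWithin_le_nhds
    have hlim : Filter.Tendsto (fun r : ℝ => (ζ ^ n * g ((x : ℂ) + r * ζ)).im) (𝓝[>] 0)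
        (𝓝 (ζ ^ n * g x).im) :=
      (Complex.continuous_im.tendsto _).comp
        ((hg.continuousAt.tendsto.comp ht).const_mul (ζ ^ n))
    refine ge_of_tendsto hlim ?_
    filter_upwards [ht.eventually hev, ht.eventually him, self_mem_nhdsWithin] with r h1 h2 hr
    have hr' : (0 : ℝ) < r := hr
    have h3 := h2 (by simpa using mul_pos hr' hζ)
    have h4 : (h ((x : ℂ) + r * ζ)).im = r ^ n * (ζ ^ n * g ((x : ℂ) + r * ζ)).im := by
      have h5 := congrArg Complex.im h1
      simp only [Complex.sub_im, h0, sub_zero] at h5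
      rw [h5, ← Complex.im_ofReal_mul]
      congr 1
      push_cast
      simp only [add_sub_cancel_left, smul_eq_mul]
      ring
    rw [h4] at h3
    exact nonneg_of_mul_nonneg_right h3 (pow_pos hr' n)
  have hpol : ∀ t : ℝ, 0 < t → t < Real.pi →
      0 ≤ Real.cos (n * t) * (g x).im + Real.sin (n * t) * (g x).re := by
    intro t h1 h2
    have := key (Complex.exp (t * Complex.I))
      (by rw [Complex.exp_ofReal_mul_I_im]; exact Real.sin_pos_of_pos_of_lt_pi h1 h2)
    rw [← Complex.exp_nat_mul, ← mul_assoc] at this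
    have e : (n : ℂ) * (t : ℂ) = ((n * t : ℝ) : ℂ) := by push_cast; rfl
    rw [e, Complex.mul_im, Complex.exp_ofReal_mul_I_im, Complex.exp_ofReal_mul_I_re] at this
    exact this
  have hn1 : n = 1 := by
    by_contra hne
    have hn2 : (2 : ℝ) ≤ n := by exact_mod_cast (by omega : 2 ≤ n)
    have hnp : (0 : ℝ) < n := by linarith
    have hpi := Real.pi_pos
    -- Both signs of `ζ ^ n` are attained in the upper half-plane when `n ≥ 2`.
    have opp : ∀ s : ℝ, 0 < s → s ≤ Real.pi / 2 →
        Real.cos s * (g x).im + Real.sin s * (g x).re = 0 := by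
      intro s h1 h2
      have a1 := hpol (s / n) (by positivity) (by
        rw [div_lt_iff₀ hnp]; nlinarith)
      have a2 := hpol ((s + Real.pi) / n) (by positivity) (by
        rw [div_lt_iff₀ hnp]; nlinarith)
      rw [mul_div_cancel₀ _ hnp.ne'] at a1 a2
      rw [Real.cos_add_pi, Real.sin_add_pi] at a2
      linarith
    have b1 := opp (Real.pi / 2) (by positivity) le_rfl
    have b2 := opp (Real.pi / 3) (by positivity) (by linarith)
    simp at b1
    rw [b1] at b2
    simp at b2
    exact hg0 (Complex.ext b1 b2)
  subst hn1
  have hd : deriv h x = g x := by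
    have e1 : h =ᶠ[𝓝 (x : ℂ)] fun z => h x + (z - x) * g z := by
      filter_upwards [hev] with z hz
      rw [pow_one, smul_eq_mul] at hz
      rw [← hz]; ring
    rw [e1.deriv_eq]
    have := (((hasDerivAt_id (x : ℂ)).sub_const (x : ℂ)).mul
      hg.differentiableAt.hasDerivAt).const_add (h x)
    simpa using this.deriv
  rw [hd]
  have hlin : ∀ t : ℝ, 0 ≤ t * (g x).im + (g x).re := by
    intro t
    have := key (t + Complex.I) (by simp)
    simpa using this
  have hi : (g x).im = 0 := by
    by_contra hne
    have := hlin ((-(g x).re - 1) / (g x).im)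
    rw [div_mul_cancel₀ _ hne] at this
    linarith
  refine ⟨lt_of_le_of_ne (by simpa [hi] using hlin 0) ?_, hi⟩
  intro h
  exact hg0 (Complex.ext h.symm hi)

/-- Removing a pole: if `f` maps `ℂ₊` to itself and `1 / (c w) - 1 / (f - f x)`, `w = z - x`,
agrees near the real point `x` with a continuous function that is real at `x`, then it has
nonnegative imaginary part on all of `ℂ₊`, by the maximum principle. -/
lemma pole_removed_im_nonneg (f h : ℂ → ℂ) (x c : ℝ) (hc : 0 < c)
    (hd : ∀ z : ℂ, 0 < z.im → AnalyticAt ℂ f z) (hmaps : ∀ z : ℂ, 0 < z.im → 0 < (f z).im)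
    (h0 : (f x).im = 0) (hcont : ContinuousAt h x) (hx : (h x).im = 0)
    (heq : ∀ z : ℂ, 0 < z.im → h z = 1 / (c * (z - x)) - 1 / (f z - f x)) :
    ∀ z : ℂ, 0 < z.im → 0 ≤ (h z).im := by
  have hne : ∀ z : ℂ, 0 < z.im → f z - f x ≠ 0 := by
    intro z hz h
    have := congrArg Complex.im h
    simp [h0] at this
    exact (hmaps z hz).ne' this
  have hne' : ∀ z : ℂ, 0 < z.im → (c : ℂ) * (z - x) ≠ 0 := by
    intro z hz h
    have := congrArg Complex.im h
    simp at this
    rcases this with h | h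
    · exact hc.ne' h
    · exact absurd h (ne_of_gt hz)
  -- `-1 / (f - f x)` contributes a nonnegative imaginary part.
  have hlow : ∀ z : ℂ, 0 < z.im → - (z.im / (c * ‖z - x‖ ^ 2)) ≤ (h z).im := by
    intro z hz
    rw [heq z hz]
    have e1 : (1 / ((c : ℂ) * (z - x))).im = - (z.im / (c * ‖z - x‖ ^ 2)) := by
      have hn : ‖z - x‖ ≠ 0 := norm_ne_zero_iff.2 (right_ne_zero_of_mul (hne' z hz))
      rw [one_div, Complex.inv_im, Complex.normSq_eq_norm_sq]
      simp only [Complex.mul_im, Complex.ofReal_re, Complex.sub_im, Complex.ofReal_im, sub_zero,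
        zero_mul, add_zero, norm_mul, Complex.norm_real, Real.norm_eq_abs, abs_of_pos hc]
      field_simp
    have e2 : (1 / (f z - f x)).im ≤ 0 := by
      rw [one_div, Complex.inv_im]
      apply div_nonpos_of_nonpos_of_nonneg _ (Complex.normSq_nonneg _)
      simp [h0, (hmaps z hz).le]
    rw [Complex.sub_im, e1]
    linarith
  have hdh : ∀ z : ℂ, 0 < z.im → DifferentiableAt ℂ h z := by
    intro z hz
    have hev : h =ᶠ[𝓝 z] fun z => 1 / (c * (z - x)) - 1 / (f z - f x) := by
      filter_upwards [(isOpen_lt continuous_const Complex.continuous_im).mem_nhds hz] with w hw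
      exact heq w hw
    refine DifferentiableAt.congr_of_eventuallyEq ?_ hev
    have := (hd z hz).differentiableAt
    have n1 := hne z hz
    have n2 := hne' z hz
    have d1 : DifferentiableAt ℂ (fun z : ℂ => (c : ℂ) * (z - x)) z := by fun_prop
    have d2 : DifferentiableAt ℂ (fun z : ℂ => f z - f x) z := by fun_prop
    exact ((differentiableAt_const 1).fun_div d1 n2).fun_sub
      ((differentiableAt_const 1).fun_div d2 n1)
  intro z hz
  by_contra hneg
  push Not at hneg
  set η : ℝ := - (h z).im / 2 with hη
  have hη0 : 0 < η := by linarith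
  obtain ⟨ρ, hρ, hball⟩ : ∃ ρ > 0, ∀ w : ℂ, ‖w - x‖ < ρ → -η ≤ (h w).im := by
    have : ∀ᶠ w in 𝓝 (x : ℂ), -η < (h w).im :=
      ((Complex.continuous_im.continuousAt).comp hcont).eventually_const_lt (by
        simp [hx]; exact hη0)
    obtain ⟨ρ, hρ, hb⟩ := Metric.eventually_nhds_iff.1 this
    exact ⟨ρ, hρ, fun w hw => (hb (by simpa [dist_eq_norm] using hw)).le⟩
  set δ := min (η * (c * ρ ^ 2)) (z.im / 2)
  set R := max (1 / (c * η)) (‖z - x‖ + 1)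
  have hδ : 0 < δ := by positivity
  have hR : 0 < R := by positivity
  set Ω : Set ℂ := {w | δ < w.im} ∩ Metric.ball (x : ℂ) R
  have hcl : closure Ω ⊆ {w | δ ≤ w.im} ∩ Metric.closedBall (x : ℂ) R := by
    apply closure_minimal
    · rintro w ⟨h1, h2⟩
      exact ⟨le_of_lt (show δ < w.im from h1), Metric.ball_subset_closedBall h2⟩
    · exact (isClosed_le continuous_const Complex.continuous_im).inter Metric.isClosed_closedBall
  have hopen : IsOpen Ω :=
    (isOpen_lt continuous_const Complex.continuous_im).inter Metric.isOpen_ball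
  have hfr : ∀ w ∈ frontier Ω, -η ≤ (h w).im := by
    intro w hw
    rw [hopen.frontier_eq] at hw
    obtain ⟨h1, h2⟩ := hcl hw.1
    have h1 : δ ≤ w.im := h1
    have h2 : ‖w - x‖ ≤ R := by simpa [dist_eq_norm] using h2
    have hw0 : 0 < w.im := hδ.trans_le h1
    by_cases hwρ : ‖w - x‖ < ρ
    · exact hball w hwρ
    push Not at hwρ
    refine le_trans (neg_le_neg ?_) (hlow w hw0)
    have hwn : 0 < ‖w - x‖ := hρ.trans_le hwρ
    rw [div_le_iff₀ (by positivity)]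
    by_cases hwδ : δ < w.im
    · have hwR : R ≤ ‖w - x‖ := by
        by_contra hlt
        push Not at hlt
        exact hw.2 ⟨hwδ, by simpa [dist_eq_norm] using hlt⟩
      have h3 : w.im ≤ ‖w - x‖ := by
        have := (le_abs_self _).trans (Complex.abs_im_le_norm (w - x))
        simpa using this
      have h4 : 1 / (c * η) ≤ ‖w - x‖ := (le_max_left _ _).trans hwR
      rw [div_le_iff₀ (by positivity)] at h4
      nlinarith
    · have h3 : w.im ≤ η * (c * ρ ^ 2) := (not_lt.1 hwδ).trans (min_le_left _ _)
      refine h3.trans ?_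
      gcongr
  have hmem : z ∈ Ω := by
    refine ⟨?_, ?_⟩
    · have : δ ≤ z.im / 2 := min_le_right _ _
      change δ < z.im
      linarith
    · have : ‖z - x‖ + 1 ≤ R := le_max_right _ _
      rw [Metric.mem_ball, dist_eq_norm]
      linarith
  have hdiff : DiffContOnCl ℂ (fun w => Complex.exp (Complex.I * h w)) Ω := by
    apply DifferentiableOn.diffContOnCl
    intro w hw
    have := hdh w (hδ.trans_le (hcl hw).1)
    exact DifferentiableAt.differentiableWithinAt (by fun_prop)
  have := Complex.norm_le_of_forall_mem_frontier_norm_le (C := Real.exp η)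
    (Metric.isBounded_ball.subset Set.inter_subset_right) hdiff
    (by
      intro w hw
      rw [Complex.norm_exp]
      have := hfr w hw
      simp
      linarith) (subset_closure hmem)
  rw [Complex.norm_exp] at this
  simp at this
  linarith

/-- If `1 / (f - f x)` differs from `1 / (c (z - x))` by a constant near `x`, then `f` is a Möbius
map, so its real part is unbounded on `ℂ₊`. -/
lemma not_moebius (f : ℂ → ℂ) (x c : ℝ) (hc : 0 < c)
    (hd : ∀ z : ℂ, 0 < z.im → AnalyticAt ℂ f z) (hmaps : ∀ z : ℂ, 0 < z.im → 0 < (f z).im)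
    (hre : ∀ z : ℂ, 0 < z.im → (f z).re ∈ Set.Icc (-Real.pi) 0)
    (h0 : (f x).im = 0) (κ : ℂ) (hκ : κ.im = 0)
    (heq : ∀ᶠ z in 𝓝 (x : ℂ), 0 < z.im → κ = 1 / (c * (z - x)) - 1 / (f z - f x)) : False := by
  have hopen : IsOpen {z : ℂ | 0 < z.im} := isOpen_lt continuous_const Complex.continuous_im
  have hconv : IsPreconnected {z : ℂ | 0 < z.im} := (convex_halfSpace_im_gt 0).isPreconnected
  have hne : ∀ z : ℂ, 0 < z.im → f z - f x ≠ 0 := by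
    intro z hz h
    have := congrArg Complex.im h
    simp [h0] at this
    exact (hmaps z hz).ne' this
  have hne' : ∀ z : ℂ, 0 < z.im → (c : ℂ) * (z - x) ≠ 0 := by
    intro z hz h
    have := congrArg Complex.im h
    simp at this
    rcases this with h | h
    · exact hc.ne' h
    · exact hz.ne' h
  have ha : AnalyticOnNhd ℂ (fun z => 1 / (c * (z - x)) - 1 / (f z - f x)) {z : ℂ | 0 < z.im} := by
    intro z hz
    have := hd z hz
    have d1 : AnalyticAt ℂ (fun z : ℂ => (c : ℂ) * (z - x)) z := by fun_prop
    have d2 : AnalyticAt ℂ (fun z : ℂ => f z - f x) z := by fun_prop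
    exact (analyticAt_const.fun_div d1 (hne' z hz)).fun_sub
      (analyticAt_const.fun_div d2 (hne z hz))
  obtain ⟨ρ, hρ, hb⟩ := Metric.eventually_nhds_iff.1 heq
  have hz0 : (0 : ℝ) < ((x : ℂ) + (ρ / 2 : ℝ) * Complex.I).im := by simp; positivity
  have hall := ha.eqOn_of_preconnected_of_eventuallyEq (analyticOnNhd_const (v := κ)) hconv hz0 (by
    have hball : Metric.ball (x : ℂ) ρ ∈ 𝓝 ((x : ℂ) + (ρ / 2 : ℝ) * Complex.I) := by
      apply Metric.isOpen_ball.mem_nhds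
      rw [Metric.mem_ball, dist_eq_norm]
      simp only [add_sub_cancel_left, norm_mul, Complex.norm_real, Complex.norm_I, mul_one,
        Real.norm_eq_abs]
      rw [abs_of_pos (by positivity)]
      linarith
    filter_upwards [hball, hopen.mem_nhds hz0] with z h1 h2
    exact (hb h1 h2).symm)
  -- The preimage of the point `v`, whose real part lies outside the strip.
  set v : ℂ := 1 + Complex.I with hv
  have hvx : (v - f x).im = 1 := by simp [hv, h0]
  have hvne : v - f x ≠ 0 := by intro h; rw [h] at hvx; simp at hvx
  set q : ℂ := κ + 1 / (v - f x) with hq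
  have hqim : q.im < 0 := by
    rw [hq, Complex.add_im, hκ, one_div, Complex.inv_im, hvx, zero_add]
    exact div_neg_of_neg_of_pos (by norm_num) (Complex.normSq_pos.2 hvne)
  have hqne : q ≠ 0 := by intro h; rw [h] at hqim; simp at hqim
  have hc' : (c : ℂ) ≠ 0 := by exact_mod_cast hc.ne'
  set z : ℂ := x + q⁻¹ / c with hz
  have hzim : 0 < z.im := by
    rw [hz, Complex.add_im, Complex.ofReal_im, zero_add, Complex.div_ofReal_im, Complex.inv_im]
    exact div_pos (div_pos (by linarith) (Complex.normSq_pos.2 hqne)) hc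
  have h1 := hall hzim
  have h2 : (c : ℂ) * (z - x) = q⁻¹ := by rw [hz]; field_simp; ring
  simp only [h2, one_div, inv_inv, hq] at h1
  have h3 : (f z - f x)⁻¹ = (v - f x)⁻¹ := by linear_combination -h1
  have h4 : f z = v := by
    have := inv_injective h3
    linear_combination this
  have h5 := (hre z hzim).2
  rw [h4, hv] at h5
  simp at h5
  norm_num at h5

/-- A self-map of `ℂ₊` with bounded real part, analytic at a real point where its value and
second derivative are real, has positive third derivative there. -/
lemma herglotz_third_deriv_pos (f : ℂ → ℂ) (x : ℝ) (hx : AnalyticAt ℂ f x)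
    (hd : ∀ z : ℂ, 0 < z.im → AnalyticAt ℂ f z) (hmaps : ∀ z : ℂ, 0 < z.im → 0 < (f z).im)
    (hre : ∀ z : ℂ, 0 < z.im → (f z).re ∈ Set.Icc (-Real.pi) 0)
    (h0 : (f x).im = 0) (h2 : (iteratedDeriv 2 f x).im = 0) :
    0 < (deriv f x).re ∧ 0 < (iteratedDeriv 3 f x).re := by
  have hup : ∀ᶠ z in 𝓝[{z : ℂ | 0 < z.im}] (x : ℂ), 0 < z.im := self_mem_nhdsWithin
  have hnb : (𝓝[{z : ℂ | 0 < z.im}] (x : ℂ)).NeBot := by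
    rw [← mem_closure_iff_nhdsWithin_neBot, Complex.closure_setOfPred_lt_im]
    simp
  have hf := boundary_deriv_pos f x hx h0 (Filter.Eventually.of_forall fun z hz => (hmaps z hz).le)
    (by
      intro hev
      obtain ⟨z, h1, h2⟩ := ((hev.filter_mono nhdsWithin_le_nhds).and hup).exists
      have := hmaps z h2
      rw [h1, h0] at this
      exact lt_irrefl _ this)
  refine ⟨hf.1, ?_⟩
  set c := (deriv f x).re with hcdef
  have hc : deriv f x = c := Complex.ext (by simp [hcdef]) (by simp [hf.2])
  have hc0 : 0 < c := hf.1
  have hcne : (c : ℂ) ≠ 0 := Complex.ofReal_ne_zero.2 (ne_of_gt hc0)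
  -- Successive divided differences carry the Taylor coefficients of `f`.
  set g := dslope f x with hg
  set g1 := dslope g x with hg1
  have P0 := hx.hasFPowerSeriesAt
  have P1 := P0.has_fpower_series_dslope_fslope
  have P2 := P1.has_fpower_series_dslope_fslope
  have P3 := P2.has_fpower_series_dslope_fslope
  have ag : AnalyticAt ℂ g x := P1.analyticAt
  have ag1 : AnalyticAt ℂ g1 x := P2.analyticAt
  have gx : g x = c := by rw [hg, dslope_same, hc]
  have g1x : g1 x = iteratedDeriv 2 f x / 2 := by
    have := P2.coeff_zero 1
    rw [← hg, ← hg1] at this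
    rw [← this]
    change FormalMultilinearSeries.coeff _ 0 = _
    simp [FormalMultilinearSeries.coeff_fslope]
  have g1d : deriv g1 x = iteratedDeriv 3 f x / 6 := by
    have := P3.coeff_zero 1
    rw [← hg, ← hg1, dslope_same] at this
    rw [← this]
    change FormalMultilinearSeries.coeff _ 0 = _
    simp [FormalMultilinearSeries.coeff_fslope, Nat.factorial]
  have gd : deriv g x = g1 x := by rw [hg1, dslope_same]
  set h : ℂ → ℂ := fun z => g1 z / (c * g z) with hh
  have hgne : (c : ℂ) * g x ≠ 0 := by rw [gx]; exact mul_ne_zero hcne hcne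
  have ah : AnalyticAt ℂ h x := ag1.div (by fun_prop) hgne
  have g1im : (g1 x).im = 0 := by rw [g1x]; simp [h2]
  have hxim : (h x).im = 0 := by
    rw [hh]
    simp only [gx]
    rw [← Complex.ofReal_mul, Complex.div_ofReal_im, g1im, zero_div]
  have heq : ∀ z : ℂ, 0 < z.im → h z = 1 / (c * (z - x)) - 1 / (f z - f x) := by
    intro z hz
    have hzx : z ≠ x := by rintro rfl; simp at hz
    have hzx' : z - x ≠ 0 := sub_ne_zero.2 hzx
    have hfz : f z - f x ≠ 0 := by
      intro h
      have := congrArg Complex.im h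
      simp [h0] at this
      exact (hmaps z hz).ne' this
    have e1 : g z = (f z - f x) / (z - x) := by
      rw [hg, dslope_of_ne _ hzx, slope_def_field]
    have e2 : g1 z = (g z - c) / (z - x) := by
      rw [hg1, dslope_of_ne _ hzx, slope_def_field, gx]
    simp only [hh]
    rw [e2, e1]
    field_simp
  have himn := pole_removed_im_nonneg f h x c hc0 hd hmaps h0 ah.continuousAt hxim heq
  have hh' := boundary_deriv_pos h x ah hxim (Filter.Eventually.of_forall himn) (by
    intro hev
    refine not_moebius f x c hc0 hd hmaps hre h0 (h x) hxim ?_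
    filter_upwards [hev] with z h1 h2
    rw [← h1, heq z h2])
  have hder : deriv h x = deriv g1 x / c ^ 2 - g1 x ^ 2 / c ^ 3 := by
    have := (ag1.differentiableAt.hasDerivAt.div
      (ag.differentiableAt.hasDerivAt.const_mul (c : ℂ)) hgne).deriv
    change deriv h x = _ at this
    rw [this, gx, gd]
    field_simp
  have e3 : iteratedDeriv 3 f x = 6 * ((c ^ 2 : ℝ) * deriv h x + ((g1 x).re ^ 2 / c : ℝ)) := by
    have e4 : g1 x = ((g1 x).re : ℂ) := Complex.ext (by simp) (by simp [g1im])
    rw [hder, g1d]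
    push_cast
    rw [← e4]
    field_simp
    ring
  rw [e3]
  have h5 := hh'.1
  have h6 : (6 : ℂ) = ((6 : ℝ) : ℂ) := by norm_num
  rw [h6, Complex.re_ofReal_mul, Complex.add_re, Complex.re_ofReal_mul, Complex.ofReal_re]
  positivity

/-! ### Generalised eigenfunctions and the spectrum -/

/-- `floquetOrbit V y v n` is the pair `(ψ (n + 1), ψ n)`, `n ≥ 0`, for the solution `ψ` of the
difference equation at energy `y` with initial data `(ψ 1, ψ 0) = v`. -/
noncomputable def floquetOrbit (V : ℤ → ℝ) (y : ℂ) (v : Fin 2 → ℂ) : ℕ → (Fin 2 → ℂ)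
  | 0 => v
  | n + 1 => (transferMatrix V ((n : ℤ) + 1) y).mulVec (floquetOrbit V y v n)

lemma monodromyMatrix_eq (p : ℕ) (V : ℤ → ℝ) (z : ℂ) : monodromyMatrix p V z =
    ((List.range p).map fun i : ℕ => transferMatrix V ((p : ℤ) - (i : ℤ)) z).prod := by
  simp only [monodromyMatrix, bind_pure_comp, List.map_eq_map, List.map_map]
  rfl

lemma monodromyMatrix_succ (V : ℤ → ℝ) (y : ℂ) (n : ℕ) :
    monodromyMatrix (n + 1) V y = transferMatrix V ((n : ℤ) + 1) y * monodromyMatrix n V y := by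
  rw [monodromyMatrix_eq, monodromyMatrix_eq]
  rw [List.range_succ_eq_map, List.map_cons, List.prod_cons, List.map_map]
  congr 1
  congr 1
  apply List.map_congr_left
  intro i _
  simp only [Function.comp]
  congr 1
  push_cast
  ring

lemma floquetOrbit_eq (V : ℤ → ℝ) (y : ℂ) (v : Fin 2 → ℂ) (n : ℕ) :
    floquetOrbit V y v n = (monodromyMatrix n V y).mulVec v := by
  induction n with
  | zero => simp [floquetOrbit, monodromyMatrix]
  | succ n ih => rw [floquetOrbit, ih, monodromyMatrix_succ, Matrix.mulVec_mulVec]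

lemma det_monodromyMatrix (V : ℤ → ℝ) (y : ℂ) (n : ℕ) : (monodromyMatrix n V y).det = 1 := by
  induction n with
  | zero => simp [monodromyMatrix]
  | succ n ih =>
    rw [monodromyMatrix_succ, Matrix.det_mul, ih]
    simp [transferMatrix, Matrix.det_fin_two]

lemma floquetOrbit_add_period (p : ℕ) (V : ℤ → ℝ) (hV : ∀ n : ℤ, V (n + p) = V n) (y ρ : ℂ)
    (v : Fin 2 → ℂ) (hv : (monodromyMatrix p V y).mulVec v = ρ • v) (n : ℕ) :
    floquetOrbit V y v (n + p) = ρ • floquetOrbit V y v n := by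
  induction n with
  | zero => rw [zero_add, floquetOrbit_eq, hv]; rfl
  | succ n ih =>
    rw [show n + 1 + p = (n + p) + 1 by ring, floquetOrbit, ih, floquetOrbit, Matrix.mulVec_smul]
    congr 2
    unfold transferMatrix
    rw [show ((n + p : ℕ) : ℤ) + 1 = ((n : ℤ) + 1) + p by push_cast; ring, hV]

/-- A multiplier of modulus one exists when the discriminant lies in `[-2, 2]`. -/
lemma exists_unimodular_multiplier (M : Matrix (Fin 2) (Fin 2) ℂ) (hdet : M.det = 1) (D : ℝ)
    (htr : M.trace = D) (hD : |D| ≤ 2) :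
    ∃ ρ : ℂ, ‖ρ‖ = 1 ∧ ∃ v : Fin 2 → ℂ, v ≠ 0 ∧ M.mulVec v = ρ • v := by
  have hsq : D ^ 2 ≤ 4 := by
    have := sq_le_sq' (by linarith [abs_nonneg D]) hD
    rw [sq_abs] at this
    linarith
  set s := Real.sqrt (4 - D ^ 2) with hs
  have hs2 : s ^ 2 = 4 - D ^ 2 := Real.sq_sqrt (by linarith)
  set ρ : ℂ := ⟨D / 2, s / 2⟩ with hρ
  have hns : Complex.normSq ρ = 1 := by
    rw [hρ, Complex.normSq_mk]
    nlinarith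
  have hn : ‖ρ‖ = 1 := by
    rw [Complex.normSq_eq_norm_sq] at hns
    exact (pow_eq_one_iff_of_nonneg (norm_nonneg ρ) two_ne_zero).1 hns
  have hchar : ρ ^ 2 - D * ρ + 1 = 0 := by
    apply Complex.ext
    · simp [hρ, pow_two]
      nlinarith
    · simp [hρ, pow_two]
      ring
  refine ⟨ρ, hn, ?_⟩
  have : (M - ρ • (1 : Matrix (Fin 2) (Fin 2) ℂ)).det = 0 := by
    rw [Matrix.trace_fin_two] at htr
    rw [Matrix.det_fin_two] at hdet ⊢
    simp
    linear_combination hchar + hdet - ρ * htr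
  obtain ⟨v, hv0, hv⟩ := Matrix.exists_mulVec_eq_zero_iff.2 this
  refine ⟨v, hv0, ?_⟩
  rw [Matrix.sub_mulVec, sub_eq_zero, Matrix.smul_mulVec, Matrix.one_mulVec] at hv
  exact hv

/-- The truncation of `ψ` to `[0, N]`. -/
noncomputable def truncated (ψ : ℕ → ℂ) (N : ℕ) : lp (fun _ : ℤ => ℂ) 2 :=
  ∑ i ∈ (Finset.range (N + 1)).map Nat.castEmbedding, lp.single 2 i (ψ i.toNat)

lemma truncated_apply (ψ : ℕ → ℂ) (N : ℕ) (m : ℤ) :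
    (truncated ψ N) m = if 0 ≤ m ∧ m ≤ N then ψ m.toNat else 0 := by
  unfold truncated
  rw [lp.coeFn_sum, Finset.sum_apply]
  simp only [Finset.sum_map, lp.single_apply, Nat.castEmbedding_apply, Pi.single_apply,
    Int.toNat_natCast]
  split_ifs with h
  · rw [Finset.sum_eq_single m.toNat]
    · rw [if_pos (by omega)]
    · intro b _ hb
      rw [if_neg (by omega)]
    · intro hm
      simp at hm
      omega
  · apply Finset.sum_eq_zero
    intro b hb
    simp at hb
    rw [if_neg (by omega)]

lemma truncated_norm (ψ : ℕ → ℂ) (N : ℕ) :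
    ‖truncated ψ N‖ ^ 2 = ∑ i ∈ Finset.range (N + 1), ‖ψ i‖ ^ 2 := by
  have := lp.norm_sum_single (p := 2) (E := fun _ : ℤ => ℂ) (by simp)
    (fun i => ψ i.toNat) ((Finset.range (N + 1)).map Nat.castEmbedding)
  simpa [truncated] using this

/-- Truncations of a bounded solution form a Weyl sequence. -/
lemma mem_spectrum_of_bounded_solution (V : ℤ → ℝ)
    (H : lp (fun _ : ℤ => ℂ) 2 →L[ℂ] lp (fun _ : ℤ => ℂ) 2)
    (hH : ∀ ψ : lp (fun _ : ℤ => ℂ) 2, ∀ n : ℤ,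
      (H ψ : ℤ → ℂ) n = ψ (n - 1) + ψ (n + 1) + (V n : ℂ) * ψ n)
    (y : ℂ) (ψ : ℕ → ℂ)
    (hrec : ∀ n : ℕ, ψ (n + 2) = (y - V ((n : ℤ) + 1)) * ψ (n + 1) - ψ n)
    (C : ℝ) (hC : ∀ n, ‖ψ n‖ ≤ C) (hns : ¬ Summable fun n => ‖ψ n‖ ^ 2) :
    y ∈ spectrum ℂ H := by
  by_contra hy
  rw [spectrum.notMem_iff] at hy
  obtain ⟨u, hu⟩ := hy
  -- Applying `y - H` to a truncation leaves only four boundary terms.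
  have hcomm : ∀ N : ℕ, 1 ≤ N → (u : lp (fun _ : ℤ => ℂ) 2 →L[ℂ] lp (fun _ : ℤ => ℂ) 2)
      (truncated ψ N) =
      lp.single 2 (-1 : ℤ) (-ψ 0) + lp.single 2 (0 : ℤ) (-(ψ 1 + (V 0 - y) * ψ 0))
        + lp.single 2 (N : ℤ) (ψ (N + 1)) + lp.single 2 ((N : ℤ) + 1) (-ψ N) := by
    intro N hN
    rw [hu]
    ext m
    have e : ((algebraMap ℂ (lp (fun _ : ℤ => ℂ) 2 →L[ℂ] lp (fun _ : ℤ => ℂ) 2) y - H)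
        (truncated ψ N) : ℤ → ℂ) m = y * truncated ψ N m - (truncated ψ N (m - 1)
          + truncated ψ N (m + 1) + V m * truncated ψ N m) := by
      rw [← hH]
      simp [Algebra.algebraMap_eq_smul_one]
      rfl
    rw [e]
    simp only [truncated_apply, lp.coeFn_add, Pi.add_apply, lp.single_apply, Pi.single_apply]
    by_cases h1 : m < -1
    · rw [if_neg (by omega), if_neg (by omega), if_neg (by omega), if_neg (by omega),
        if_neg (by omega), if_neg (by omega), if_neg (by omega)]
      simp
    by_cases h2 : m = -1
    · subst h2
      rw [if_neg (by omega), if_neg (by omega), if_pos (by omega), if_pos (by omega),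
        if_neg (by omega), if_neg (by omega), if_neg (by omega)]
      simp
    by_cases h3 : m = 0
    · subst h3
      rw [if_pos (by omega), if_neg (by omega), if_pos (by omega), if_neg (by omega),
        if_pos (by omega), if_neg (by omega), if_neg (by omega)]
      simp
      ring
    by_cases h4 : m < N
    · obtain ⟨k, rfl⟩ : ∃ k : ℕ, m = (k : ℤ) + 1 := ⟨(m - 1).toNat, by omega⟩
      rw [if_pos (by omega), if_pos (by omega), if_pos (by omega), if_neg (by omega),
        if_neg (by omega), if_neg (by omega), if_neg (by omega)]
      have := hrec k
      rw [show ((k : ℤ) + 1).toNat = k + 1 by omega, show ((k : ℤ) + 1 - 1).toNat = k by omega,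
        show ((k : ℤ) + 1 + 1).toNat = k + 2 by omega, this]
      ring
    by_cases h5 : m = N
    · obtain ⟨k, rfl⟩ : ∃ k : ℕ, N = k + 1 := ⟨N - 1, by omega⟩
      subst h5
      rw [if_pos (by omega), if_pos (by omega), if_neg (by omega), if_neg (by omega),
        if_neg (by omega), if_pos (by omega), if_neg (by omega)]
      have := hrec k
      rw [show (((k + 1 : ℕ) : ℤ)).toNat = k + 1 by omega,
        show (((k + 1 : ℕ) : ℤ) - 1).toNat = k by omega, this]
      push_cast
      ring
    by_cases h6 : m = N + 1
    · subst h6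
      rw [if_neg (by omega), if_pos (by omega), if_neg (by omega), if_neg (by omega),
        if_neg (by omega), if_neg (by omega), if_pos (by omega)]
      simp
    · rw [if_neg (by omega), if_neg (by omega), if_neg (by omega), if_neg (by omega),
        if_neg (by omega), if_neg (by omega), if_neg (by omega)]
      simp
  set B := C + ‖ψ 1 + (V 0 - y) * ψ 0‖ + C + C with hB
  have hC0 : 0 ≤ C := (norm_nonneg _).trans (hC 0)
  have hbd : ∀ N : ℕ, 1 ≤ N → ‖truncated ψ N‖ ≤
      ‖((u⁻¹ : (lp (fun _ : ℤ => ℂ) 2 →L[ℂ] lp (fun _ : ℤ => ℂ) 2)ˣ) :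
        lp (fun _ : ℤ => ℂ) 2 →L[ℂ] lp (fun _ : ℤ => ℂ) 2)‖ * B := by
    intro N hN
    have e : truncated ψ N =
        ((u⁻¹ : (lp (fun _ : ℤ => ℂ) 2 →L[ℂ] lp (fun _ : ℤ => ℂ) 2)ˣ) :
        lp (fun _ : ℤ => ℂ) 2 →L[ℂ] lp (fun _ : ℤ => ℂ) 2)
        ((u : lp (fun _ : ℤ => ℂ) 2 →L[ℂ] lp (fun _ : ℤ => ℂ) 2) (truncated ψ N)) := by
      rw [← mul_apply_eq_comp, Units.inv_mul]
      rfl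
    rw [e]
    refine (ContinuousLinearMap.le_opNorm _ _).trans ?_
    gcongr
    rw [hcomm N hN]
    refine (norm_add_le _ _).trans ?_
    refine add_le_add ((norm_add_le _ _).trans ?_) ?_
    · refine add_le_add ((norm_add_le _ _).trans ?_) ?_
      · refine add_le_add ?_ ?_
        · rw [lp.norm_single (by norm_num), norm_neg]; exact hC 0
        · rw [lp.norm_single (by norm_num), norm_neg]
      · rw [lp.norm_single (by norm_num)]; exact hC _
    · rw [lp.norm_single (by norm_num), norm_neg]; exact hC _
  apply hns
  refine summable_of_sum_range_le (c := (‖((u⁻¹ : (lp (fun _ : ℤ => ℂ) 2 →L[ℂ]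
    lp (fun _ : ℤ => ℂ) 2)ˣ) : lp (fun _ : ℤ => ℂ) 2 →L[ℂ] lp (fun _ : ℤ => ℂ) 2)‖ * B) ^ 2)
    (fun n => by positivity) ?_
  intro n
  have h1 : ∑ i ∈ Finset.range n, ‖ψ i‖ ^ 2 ≤ ∑ i ∈ Finset.range (n + 1 + 1), ‖ψ i‖ ^ 2 :=
    Finset.sum_le_sum_of_subset_of_nonneg (Finset.range_subset_range.2 (by omega))
      (fun i _ _ => by positivity)
  refine h1.trans ?_
  rw [← truncated_norm]
  have := hbd (n + 1) (by omega)
  gcongr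

/-- Energies with discriminant in `[-2, 2]` belong to the spectrum. -/
lemma mem_spectrum_of_discriminant
    (p : ℕ) (hp : 1 ≤ p) (V : ℤ → ℝ) (hV : ∀ n : ℤ, V (n + p) = V n)
    (H : lp (fun _ : ℤ => ℂ) 2 →L[ℂ] lp (fun _ : ℤ => ℂ) 2)
    (hH : ∀ ψ : lp (fun _ : ℤ => ℂ) 2, ∀ n : ℤ,
      (H ψ : ℤ → ℂ) n = ψ (n - 1) + ψ (n + 1) + (V n : ℂ) * ψ n)
    (y : ℂ) (D : ℝ) (hD : floquetDiscriminant p V y = D) (hD2 : |D| ≤ 2) :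
    y ∈ spectrum ℂ H := by
  obtain ⟨ρ, hρ, v, hv0, hv⟩ :=
    exists_unimodular_multiplier _ (det_monodromyMatrix V y p) D hD hD2
  set w := floquetOrbit V y v with hw
  set ψ : ℕ → ℂ := fun n => w n 1 with hψ
  have hstep : ∀ n, w n 0 = ψ (n + 1) := by
    intro n
    simp [hψ, hw, floquetOrbit, transferMatrix, Matrix.vecHead, Matrix.vecTail]
  have hper : ∀ n, ‖ψ (n + p)‖ = ‖ψ n‖ := by
    intro n
    simp only [hψ, hw]
    rw [floquetOrbit_add_period p V hV y ρ v hv]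
    simp [hρ]
  have hperk : ∀ k n, ‖ψ (n + k * p)‖ = ‖ψ n‖ := by
    intro k
    induction k with
    | zero => simp
    | succ k ih =>
      intro n
      rw [show n + (k + 1) * p = (n + k * p) + p by ring, hper, ih]
  refine mem_spectrum_of_bounded_solution V H hH y ψ ?_ (∑ i ∈ Finset.range p, ‖ψ i‖) ?_ ?_
  · intro n
    rw [← hstep, ← hstep]
    simp [hψ, hw, floquetOrbit, transferMatrix, Matrix.vecHead, Matrix.vecTail]
    ring
  · intro n
    have h1 : ‖ψ n‖ = ‖ψ (n % p)‖ := by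
      conv_lhs => rw [← Nat.mod_add_div' n p]
      exact hperk _ _
    rw [h1]
    exact Finset.single_le_sum (f := fun i => ‖ψ i‖) (fun i _ => norm_nonneg _)
      (Finset.mem_range.2 (Nat.mod_lt _ hp))
  · intro hsum
    have hz : ∀ n, ψ n = 0 := by
      intro n
      have h1 : Filter.Tendsto (fun k : ℕ => n + k * p) Filter.atTop Filter.atTop := by
        apply Filter.tendsto_atTop_mono (f := fun k : ℕ => k) _ Filter.tendsto_id
        intro k
        nlinarith
      have h2 := hsum.tendsto_atTop_zero.comp h1
      have h3 : ((fun n => ‖ψ n‖ ^ 2) ∘ fun k : ℕ => n + k * p) = fun _ => ‖ψ n‖ ^ 2 := by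
        funext k
        simp only [Function.comp, hperk]
      rw [h3] at h2
      have := tendsto_nhds_unique h2 tendsto_const_nhds
      simpa using this.symm
    apply hv0
    funext i
    fin_cases i
    · exact (hstep 0).trans (hz 1)
    · exact hz 0

/-! ### The discriminant as a real-rooted polynomial -/

lemma exists_discriminant_polynomial (p : ℕ) (V : ℤ → ℝ) :
    ∃ P : Polynomial ℝ, ∀ z : ℂ, floquetDiscriminant p V z = Polynomial.aeval z P := by
  have hM : ∃ M : Matrix (Fin 2) (Fin 2) (Polynomial ℝ), ∀ z : ℂ,
      monodromyMatrix p V z = (Polynomial.aeval z).mapMatrix M := by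
    induction p with
    | zero => exact ⟨1, fun z => by rw [map_one]; simp [monodromyMatrix]⟩
    | succ n ih =>
      obtain ⟨M, hM⟩ := ih
      refine ⟨!![Polynomial.X - Polynomial.C (V ((n : ℤ) + 1)), -1; 1, 0] * M, fun z => ?_⟩
      rw [map_mul, ← hM, monodromyMatrix_succ]
      congr 1
      ext i j
      fin_cases i <;> fin_cases j <;> simp [transferMatrix]
  obtain ⟨M, hM⟩ := hM
  refine ⟨M.trace, fun z => ?_⟩
  rw [floquetDiscriminant, hM z, Matrix.trace_fin_two, Matrix.trace_fin_two, map_add]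
  rfl

/-- Laguerre's inequality `R R'' ≤ R' ^ 2` for a polynomial with the real roots `s`. -/
lemma laguerre_nonneg (s : Multiset ℝ) (x : ℝ) :
    0 ≤ ((s.map fun r => Polynomial.X - Polynomial.C r).prod.derivative.eval x) ^ 2
      - (s.map fun r => Polynomial.X - Polynomial.C r).prod.eval x
        * (s.map fun r => Polynomial.X - Polynomial.C r).prod.derivative.derivative.eval x := by
  induction s using Multiset.induction_on with
  | empty => simp
  | cons r s ih =>
    rw [Multiset.map_cons, Multiset.prod_cons]
    set Q := (s.map fun r => Polynomial.X - Polynomial.C r).prod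
    simp only [Polynomial.derivative_mul, Polynomial.derivative_sub, Polynomial.derivative_X,
      Polynomial.derivative_C, Polynomial.eval_add, Polynomial.eval_mul, Polynomial.eval_sub,
      Polynomial.eval_X, Polynomial.eval_C, Polynomial.derivative_add, sub_zero,
      one_mul]
    nlinarith [sq_nonneg (Q.eval x), mul_nonneg (sq_nonneg (x - r)) ih]

/-- Laguerre's inequality is strict off the roots, unless the polynomial is constant. -/
lemma laguerre_pos (s : Multiset ℝ) (hs : s ≠ 0) (x : ℝ)
    (hx : (s.map fun r => Polynomial.X - Polynomial.C r).prod.eval x ≠ 0) :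
    0 < ((s.map fun r => Polynomial.X - Polynomial.C r).prod.derivative.eval x) ^ 2
      - (s.map fun r => Polynomial.X - Polynomial.C r).prod.eval x
        * (s.map fun r => Polynomial.X - Polynomial.C r).prod.derivative.derivative.eval x := by
  obtain ⟨r, hr⟩ := Multiset.exists_mem_of_ne_zero hs
  obtain ⟨s, rfl⟩ := Multiset.exists_cons_of_mem hr
  have ih := laguerre_nonneg s x
  rw [Multiset.map_cons, Multiset.prod_cons] at hx ⊢
  set Q := (s.map fun r => Polynomial.X - Polynomial.C r).prod
  have hQ : Q.eval x ≠ 0 := by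
    rw [Polynomial.eval_mul] at hx
    exact right_ne_zero_of_mul hx
  have hQ2 : 0 < Q.eval x ^ 2 := by positivity
  simp only [Polynomial.derivative_mul, Polynomial.derivative_sub, Polynomial.derivative_X,
    Polynomial.derivative_C, Polynomial.eval_add, Polynomial.eval_mul, Polynomial.eval_sub,
    Polynomial.eval_X, Polynomial.eval_C, Polynomial.derivative_add, sub_zero,
    one_mul]
  nlinarith [mul_nonneg (sq_nonneg (x - r)) ih]

lemma real_rooted_eq_prod (P : Polynomial ℝ)
    (hP : ∀ z : ℂ, Polynomial.aeval z P = 0 → z.im = 0) :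
    ∃ (a : ℝ) (s : Multiset ℝ),
      P = Polynomial.C a * (s.map fun r => Polynomial.X - Polynomial.C r).prod := by
  set Q : Polynomial ℂ := P.map (algebraMap ℝ ℂ) with hQ
  refine ⟨P.leadingCoeff, Q.roots.map Complex.re, ?_⟩
  apply Polynomial.map_injective (algebraMap ℝ ℂ) (algebraMap ℝ ℂ).injective
  rw [← hQ]
  conv_lhs => rw [(IsAlgClosed.splits Q).eq_prod_roots]
  rw [Polynomial.map_mul, Polynomial.map_C, Polynomial.map_multiset_prod, Multiset.map_map,
    Multiset.map_map]
  congr 1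
  · rw [hQ, Polynomial.leadingCoeff_map]
  · congr 1
    apply Multiset.map_congr rfl
    intro z hz
    have h1 : Polynomial.aeval z P = 0 := by
      have := (Polynomial.mem_roots'.1 hz).2
      rw [Polynomial.IsRoot, hQ, Polynomial.eval_map] at this
      exact this
    have h2 : ((z.re : ℝ) : ℂ) = z := Complex.ext (by simp) (by simp [hP z h1])
    simp [h2]

/-- At a critical point where `|P| ≤ 2`, a real-rooted polynomial cannot leave `[-2, 2]`: by
Laguerre's inequality a critical value is never a positive minimum or a negative maximum. -/
lemma critical_no_escape (P : Polynomial ℝ)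
    (hP : ∀ z : ℂ, Polynomial.aeval z P = 0 → z.im = 0) (e : ℝ)
    (hd : P.derivative.eval e = 0) (he : |P.eval e| ≤ 2) : ∀ᶠ y in 𝓝 e, |P.eval y| ≤ 2 := by
  have hcont : ContinuousAt (fun y => P.eval y) e := P.continuous.continuousAt
  have hd1 : deriv (fun y => P.eval y) = fun y => P.derivative.eval y := by
    funext y; exact P.deriv
  have hd2 : deriv (deriv fun y => P.eval y) e = P.derivative.derivative.eval e := by
    rw [hd1]; exact P.derivative.deriv
  obtain ⟨a, s, hs⟩ := real_rooted_eq_prod P hP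
  rcases he.lt_or_eq with hlt | heq
  · filter_upwards [hcont.abs.eventually_lt_const hlt] with y hy using hy.le
  by_cases hs0 : s = 0
  · subst hs0
    rw [hs] at he ⊢
    simp at he ⊢
    exact he
  have hlag : P.eval e * P.derivative.derivative.eval e < 0 := by
    have hne : P.eval e ≠ 0 := by
      intro h; rw [h] at heq; norm_num at heq
    rw [hs, Polynomial.eval_mul, Polynomial.eval_C] at hne
    have h1 := laguerre_pos s hs0 e (right_ne_zero_of_mul hne)
    have ha : 0 < a ^ 2 := by
      have := left_ne_zero_of_mul hne
      positivity
    rw [hs] at hd ⊢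
    simp only [Polynomial.derivative_C_mul, Polynomial.eval_mul, Polynomial.eval_C] at hd ⊢
    have h0 := (mul_eq_zero.1 hd).resolve_left (left_ne_zero_of_mul hne)
    rw [h0] at h1
    nlinarith
  rcases eq_or_eq_neg_of_abs_eq heq with h2 | h2
  · have hmax : IsLocalMax (fun y => P.eval y) e := by
      apply isLocalMax_of_deriv_deriv_neg _ (by rw [hd1]; exact hd) hcont
      rw [hd2]
      rw [h2] at hlag
      linarith
    filter_upwards [hmax, hcont.eventually_const_lt (show (-2 : ℝ) < P.eval e by rw [h2]; norm_num)]
      with y h3 h4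
    rw [h2] at h3
    exact abs_le.2 ⟨h4.le, h3⟩
  · have hmin : IsLocalMin (fun y => P.eval y) e := by
      apply isLocalMin_of_deriv_deriv_pos _ (by rw [hd1]; exact hd) hcont
      rw [hd2]
      rw [h2] at hlag
      linarith
    filter_upwards [hmin, hcont.eventually_lt_const (show P.eval e < 2 by rw [h2]; norm_num)]
      with y h3 h4
    rw [h2] at h3
    exact abs_le.2 ⟨h3, h4.le⟩

/-! ### The band -/

/-- Zeros of the discriminant are real: it takes the value `2 cos (p Θ)` with `p Θ ∈ ℂ₊` on
`ℂ₊`, and commutes with conjugation. -/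
lemma discriminant_real_rooted (p : ℕ) (hp : 1 ≤ p) (V : ℤ → ℝ) (Θ : ℂ → ℂ)
    (hmaps : ∀ z : ℂ, 0 < z.im → 0 < (Θ z).im)
    (hdisc : ∀ z : ℂ, 0 < z.im →
      2 * Complex.cos ((p : ℂ) * Θ z) = floquetDiscriminant p V z)
    (P : Polynomial ℝ) (hP : ∀ z : ℂ, floquetDiscriminant p V z = Polynomial.aeval z P) :
    ∀ z : ℂ, Polynomial.aeval z P = 0 → z.im = 0 := by
  have hup : ∀ z : ℂ, Polynomial.aeval z P = 0 → ¬ 0 < z.im := by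
    intro z hz him
    have h1 := hdisc z him
    rw [hP, hz] at h1
    have h2 : Complex.cos ((p : ℂ) * Θ z) = 0 := by simpa using h1
    obtain ⟨k, hk⟩ := Complex.cos_eq_zero_iff.1 h2
    have h3 := congrArg Complex.im hk
    have h4 : ((2 * (k : ℂ) + 1) * Real.pi / 2).im = 0 := by
      rw [show ((2 * (k : ℂ) + 1) * Real.pi / 2) = (((2 * k + 1) * Real.pi / 2 : ℝ) : ℂ) by
        push_cast; rfl]
      exact Complex.ofReal_im _
    rw [h4] at h3
    simp at h3
    rcases h3 with h3 | h3
    · omega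
    · exact (hmaps z him).ne' h3
  intro z hz
  have h1 := hup z hz
  have h2 := hup (starRingEnd ℂ z) (by
    rw [Polynomial.aeval_conj, hz, map_zero])
  simp at h1 h2
  linarith

/-- At the edge `e` of a band, approached from inside along `l`, a bound on `Θ'` forces the
discriminant to be critical at `e`, so it could not exceed `2` in modulus near `e`. -/
lemma edge_contradiction (p : ℕ) (P : Polynomial ℝ)
    (hroot : ∀ z : ℂ, Polynomial.aeval z P = 0 → z.im = 0) (e M : ℝ)
    (l l' : Filter ℝ) [l.NeBot] [l'.NeBot] (hl : l ≤ 𝓝 e) (hl' : l' ≤ 𝓝 e)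
    (hin : ∀ᶠ y in l, |P.eval y| ≤ 2) (hout : ∀ᶠ y in l', 2 < |P.eval y|)
    (hder : ∀ᶠ y in l, (P.derivative.eval y) ^ 2 ≤ p ^ 2 * (4 - P.eval y ^ 2) * M ^ 2) : False := by
  have hc : Filter.Tendsto (fun y => P.eval y) (𝓝 e) (𝓝 (P.eval e)) := P.continuous.tendsto e
  have hc' : Filter.Tendsto (fun y => P.derivative.eval y) (𝓝 e) (𝓝 (P.derivative.eval e)) :=
    P.derivative.continuous.tendsto e
  have h1 : |P.eval e| ≤ 2 := le_of_tendsto (hc.abs.mono_left hl) hin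
  have h2 : 2 ≤ |P.eval e| :=
    ge_of_tendsto (hc.abs.mono_left hl') (hout.mono fun y hy => hy.le)
  have h3 : P.eval e ^ 2 = 4 := by
    rw [← sq_abs, le_antisymm h1 h2]; norm_num
  have h4 : (P.derivative.eval e) ^ 2 ≤ p ^ 2 * (4 - P.eval e ^ 2) * M ^ 2 :=
    le_of_tendsto_of_tendsto ((hc'.mono_left hl).pow 2)
      ((((hc.mono_left hl).pow 2).const_sub 4).const_mul ((p : ℝ) ^ 2) |>.mul_const (M ^ 2)) hder
  have h5 : P.derivative.eval e = 0 := by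
    rw [h3] at h4
    have : (P.derivative.eval e) ^ 2 ≤ 0 := by simpa using h4
    nlinarith [sq_nonneg (P.derivative.eval e)]
  have h6 := (critical_no_escape P hroot e h5 h1).filter_mono hl'
  obtain ⟨y, h7, h8⟩ := (h6.and hout).exists
  linarith

/-- Derivatives of an analytic function that is real on a real interval are real there. -/
lemma deriv_im_eq_zero (F : ℂ → ℂ) (a b x : ℝ) (hx : x ∈ Set.Ioo a b)
    (hF : AnalyticAt ℂ F x) (hreal : ∀ y : ℝ, y ∈ Set.Ioo a b → (F y).im = 0) :
    (deriv F x).im = 0 := by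
  have h1 := (hF.differentiableAt.hasDerivAt.const_mul (-Complex.I)).real_of_complex
  have h2 : (fun y : ℝ => (-Complex.I * F y).re) =ᶠ[𝓝 x] fun _ => 0 := by
    filter_upwards [isOpen_Ioo.mem_nhds hx] with y hy
    simp [hreal y hy]
  have h3 := (h1.congr_of_eventuallyEq h2.symm).unique (hasDerivAt_const x 0)
  simpa using h3

/-- **Unique inflection point of `Θ` in each band** (part of Lemma 2.1).
If `[λm, λn]` is a connected component of `Σ = σ(H_V)` and `Θ̃` is an analytic extension of
the Marchenko–Ostrovski mapping through `(λm, λn)`, real on `(λm, λn)`, then `Θ̃''` has a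
unique zero `x*` in `(λm, λn)`, and `Θ̃'''(x*) ≠ 0`. -/
theorem MO_second_derivative_unique_zero
    (p : ℕ) (hp : 1 ≤ p) (V : ℤ → ℝ) (hV : ∀ n : ℤ, V (n + p) = V n)
    (H : lp (fun _ : ℤ => ℂ) 2 →L[ℂ] lp (fun _ : ℤ => ℂ) 2)
    (hH : ∀ ψ : lp (fun _ : ℤ => ℂ) 2, ∀ n : ℤ,
      (H ψ : ℤ → ℂ) n = ψ (n - 1) + ψ (n + 1) + (V n : ℂ) * ψ n)
    (lm ln : ℝ) (hlt : lm < ln)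
    (hsub : ∀ y : ℝ, y ∈ Set.Icc lm ln → (y : ℂ) ∈ spectrum ℂ H)
    (hgap : ∃ ε > 0, ∀ y : ℝ,
      y ∈ Set.Ioo (lm - ε) lm ∪ Set.Ioo ln (ln + ε) → (y : ℂ) ∉ spectrum ℂ H)
    (U : Set ℂ) (hU : IsOpen U) (hUsub : ∀ y : ℝ, y ∈ Set.Ioo lm ln → (y : ℂ) ∈ U)
    (Θ : ℂ → ℂ)
    (hana : AnalyticOnNhd ℂ Θ ({z : ℂ | 0 < z.im} ∪ U))
    (hmaps : ∀ z : ℂ, 0 < z.im → 0 < (Θ z).im)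
    (hre : ∀ z : ℂ, 0 < z.im → (Θ z).re ∈ Set.Icc (-Real.pi) 0)
    (hdisc : ∀ z : ℂ, 0 < z.im →
      2 * Complex.cos ((p : ℂ) * Θ z) = floquetDiscriminant p V z)
    (hreal : ∀ y : ℝ, y ∈ Set.Ioo lm ln → (Θ (y : ℂ)).im = 0) :
    ∃ x : ℝ, x ∈ Set.Ioo lm ln ∧ iteratedDeriv 2 Θ (x : ℂ) = 0
      ∧ iteratedDeriv 3 Θ (x : ℂ) ≠ 0
      ∧ ∀ y : ℝ, y ∈ Set.Ioo lm ln → iteratedDeriv 2 Θ (y : ℂ) = 0 → y = x := by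
  have hUana : ∀ y : ℝ, y ∈ Set.Ioo lm ln → AnalyticAt ℂ Θ y :=
    fun y hy => hana y (Or.inr (hUsub y hy))
  have hHana : ∀ z : ℂ, 0 < z.im → AnalyticAt ℂ Θ z := fun z hz => hana z (Or.inl hz)
  obtain ⟨P, hP⟩ := exists_discriminant_polynomial p V
  have hPr : ∀ y : ℝ, floquetDiscriminant p V y = (P.eval y : ℝ) := by
    intro y
    rw [hP]
    exact Polynomial.aeval_algebraMap_apply_eq_algebraMap_eval y P
  have hroot := discriminant_real_rooted p hp V Θ hmaps hdisc P hP
  have hi2 : iteratedDeriv 2 Θ = deriv (deriv Θ) := by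
    rw [iteratedDeriv_succ, iteratedDeriv_one]
  have hi3 : iteratedDeriv 3 Θ = deriv (deriv (deriv Θ)) := by
    rw [iteratedDeriv_succ, hi2]
  have hr1 : ∀ y : ℝ, y ∈ Set.Ioo lm ln → (deriv Θ y).im = 0 := fun y hy =>
    deriv_im_eq_zero Θ lm ln y hy (hUana y hy) hreal
  have hr2 : ∀ y : ℝ, y ∈ Set.Ioo lm ln → (deriv (deriv Θ) y).im = 0 := fun y hy =>
    deriv_im_eq_zero _ lm ln y hy (hUana y hy).deriv hr1
  have hpos : ∀ y : ℝ, y ∈ Set.Ioo lm ln →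
      0 < (deriv Θ y).re ∧ 0 < (deriv (deriv (deriv Θ)) y).re := by
    intro y hy
    have := herglotz_third_deriv_pos Θ y (hUana y hy) hHana hmaps hre (hreal y hy)
      (by rw [hi2]; exact hr2 y hy)
    rwa [hi3] at this
  have hdθ : ∀ y : ℝ, y ∈ Set.Ioo lm ln →
      HasDerivAt (fun x : ℝ => (Θ x).re) (deriv Θ y).re y := fun y hy =>
    (hUana y hy).differentiableAt.hasDerivAt.real_of_complex
  have hd1 : ∀ y : ℝ, y ∈ Set.Ioo lm ln →
      HasDerivAt (fun x : ℝ => (deriv Θ x).re) (deriv (deriv Θ) y).re y := fun y hy =>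
    (hUana y hy).deriv.differentiableAt.hasDerivAt.real_of_complex
  have hd2 : ∀ y : ℝ, y ∈ Set.Ioo lm ln →
      HasDerivAt (fun x : ℝ => (deriv (deriv Θ) x).re) (deriv (deriv (deriv Θ)) y).re y :=
    fun y hy => (hUana y hy).deriv.deriv.differentiableAt.hasDerivAt.real_of_complex
  have hc2 : ContinuousOn (fun x : ℝ => (deriv (deriv Θ) x).re) (Set.Ioo lm ln) :=
    fun y hy => (hd2 y hy).continuousAt.continuousWithinAt
  have hmono : StrictMonoOn (fun x : ℝ => (deriv (deriv Θ) x).re) (Set.Ioo lm ln) := by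
    apply strictMonoOn_of_deriv_pos (convex_Ioo lm ln) hc2
    intro y hy
    rw [interior_Ioo] at hy
    rw [(hd2 y hy).deriv]
    exact (hpos y hy).2
  -- The defining relation extends to the band by continuity.
  have hcos : ∀ y : ℝ, y ∈ Set.Ioo lm ln → P.eval y = 2 * Real.cos (p * (Θ y).re) := by
    intro y hy
    have hnb : (𝓝[{z : ℂ | 0 < z.im}] (y : ℂ)).NeBot := by
      rw [← mem_closure_iff_nhdsWithin_neBot, Complex.closure_setOfPred_lt_im]
      simp
    have t1 : Filter.Tendsto (fun z => 2 * Complex.cos ((p : ℂ) * Θ z))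
        (𝓝[{z : ℂ | 0 < z.im}] (y : ℂ)) (𝓝 (2 * Complex.cos ((p : ℂ) * Θ y))) := by
      have hca := (hUana y hy).continuousAt
      have : ContinuousAt (fun z => 2 * Complex.cos ((p : ℂ) * Θ z)) y := by fun_prop
      exact this.tendsto.mono_left nhdsWithin_le_nhds
    have t2 : Filter.Tendsto (fun z => Polynomial.aeval z P)
        (𝓝[{z : ℂ | 0 < z.im}] (y : ℂ)) (𝓝 (Polynomial.aeval (y : ℂ) P)) :=
      (P.continuous_aeval.tendsto (y : ℂ)).mono_left nhdsWithin_le_nhds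
    have t3 := t1.congr' (f₂ := fun z => Polynomial.aeval z P) (by
      filter_upwards [self_mem_nhdsWithin] with z hz
      rw [hdisc z hz, hP])
    have h1 := tendsto_nhds_unique t2 t3
    rw [← hP, hPr] at h1
    have h2 : Θ y = ((Θ y).re : ℂ) := Complex.ext (by simp) (by simp [hreal y hy])
    rw [h2] at h1
    exact_mod_cast h1
  have hin : ∀ y : ℝ, y ∈ Set.Ioo lm ln → |P.eval y| ≤ 2 := by
    intro y hy
    rw [hcos y hy, abs_mul, abs_two]
    linarith [Real.abs_cos_le_one (p * (Θ y).re)]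
  have hder : ∀ y : ℝ, y ∈ Set.Ioo lm ln →
      (P.derivative.eval y) ^ 2 = p ^ 2 * (4 - P.eval y ^ 2) * (deriv Θ y).re ^ 2 := by
    intro y hy
    have h1 : HasDerivAt (fun x : ℝ => 2 * Real.cos (p * (Θ x).re))
        (2 * (-Real.sin (p * (Θ y).re) * (p * (deriv Θ y).re))) y :=
      (((hdθ y hy).const_mul (p : ℝ)).cos).const_mul 2
    have h2 : (fun x => P.eval x) =ᶠ[𝓝 y] fun x : ℝ => 2 * Real.cos (p * (Θ x).re) := by
      filter_upwards [isOpen_Ioo.mem_nhds hy] with x hx using hcos x hx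
    rw [(P.hasDerivAt y).unique (h1.congr_of_eventuallyEq h2), hcos y hy]
    linear_combination
      4 * (p : ℝ) ^ 2 * (deriv Θ y).re ^ 2 * (Real.sin_sq_add_cos_sq (p * (Θ y).re))
  obtain ⟨ε, hε, hgap⟩ := hgap
  have hout : ∀ y : ℝ, y ∈ Set.Ioo (lm - ε) lm ∪ Set.Ioo ln (ln + ε) → 2 < |P.eval y| := by
    intro y hy
    by_contra hle
    exact hgap y hy (mem_spectrum_of_discriminant p hp V hV H hH y _ (hPr y) (not_lt.1 hle))
  set m := (lm + ln) / 2 with hm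
  have hmm : m ∈ Set.Ioo lm ln := ⟨by linarith, by linarith⟩
  -- A sign-definite `Θ''` would bound `Θ'` at one of the two band edges.
  have hneg : ∃ a ∈ Set.Ioo lm ln, (deriv (deriv Θ) (a : ℂ)).re < 0 := by
    by_contra hcon
    push Not at hcon
    have hm1 : MonotoneOn (fun x : ℝ => (deriv Θ x).re) (Set.Ioo lm ln) := by
      apply monotoneOn_of_deriv_nonneg (convex_Ioo lm ln)
      · exact fun y hy => (hd1 y hy).continuousAt.continuousWithinAt
      · rw [interior_Ioo]
        exact fun y hy => (hd1 y hy).differentiableAt.differentiableWithinAt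
      · rw [interior_Ioo]
        intro y hy
        rw [(hd1 y hy).deriv]
        exact hcon y hy
    refine edge_contradiction p P hroot lm (deriv Θ m).re (𝓝[>] lm) (𝓝[<] lm)
      nhdsWithin_le_nhds nhdsWithin_le_nhds ?_ ?_ ?_
    · filter_upwards [Ioo_mem_nhdsGT hlt] with y hy using hin y hy
    · filter_upwards [Ioo_mem_nhdsLT (show lm - ε < lm by linarith)] with y hy
        using hout y (Or.inl hy)
    · filter_upwards [Ioo_mem_nhdsGT hmm.1] with y hy
      have hy' : y ∈ Set.Ioo lm ln := ⟨hy.1, hy.2.trans hmm.2⟩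
      rw [hder y hy']
      have h1 : (deriv Θ y).re ≤ (deriv Θ m).re := hm1 hy' hmm hy.2.le
      have h2 := (hpos y hy').1
      have h3 : 0 ≤ 4 - P.eval y ^ 2 := by
        rw [← sq_abs]
        nlinarith [hin y hy', abs_nonneg (P.eval y)]
      gcongr
  have hpos2 : ∃ b ∈ Set.Ioo lm ln, 0 < (deriv (deriv Θ) (b : ℂ)).re := by
    by_contra hcon
    push Not at hcon
    have hm1 : AntitoneOn (fun x : ℝ => (deriv Θ x).re) (Set.Ioo lm ln) := by
      apply antitoneOn_of_deriv_nonpos (convex_Ioo lm ln)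
      · exact fun y hy => (hd1 y hy).continuousAt.continuousWithinAt
      · rw [interior_Ioo]
        exact fun y hy => (hd1 y hy).differentiableAt.differentiableWithinAt
      · rw [interior_Ioo]
        intro y hy
        rw [(hd1 y hy).deriv]
        exact hcon y hy
    refine edge_contradiction p P hroot ln (deriv Θ m).re (𝓝[<] ln) (𝓝[>] ln)
      nhdsWithin_le_nhds nhdsWithin_le_nhds ?_ ?_ ?_
    · filter_upwards [Ioo_mem_nhdsLT hlt] with y hy using hin y hy
    · filter_upwards [Ioo_mem_nhdsGT (show ln < ln + ε by linarith)] with y hy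
        using hout y (Or.inr hy)
    · filter_upwards [Ioo_mem_nhdsLT hmm.2] with y hy
      have hy' : y ∈ Set.Ioo lm ln := ⟨hmm.1.trans hy.1, hy.2⟩
      rw [hder y hy']
      have h1 : (deriv Θ y).re ≤ (deriv Θ m).re := hm1 hmm hy' hy.1.le
      have h2 := (hpos y hy').1
      have h3 : 0 ≤ 4 - P.eval y ^ 2 := by
        rw [← sq_abs]
        nlinarith [hin y hy', abs_nonneg (P.eval y)]
      gcongr
  obtain ⟨a, ha, hna⟩ := hneg
  obtain ⟨b, hb, hpb⟩ := hpos2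
  obtain ⟨x, hx, hx0⟩ := isPreconnected_Ioo.intermediate_value ha hb hc2 ⟨hna.le, hpb.le⟩
  refine ⟨x, hx, ?_, ?_, ?_⟩
  · rw [hi2]
    exact Complex.ext hx0 (hr2 x hx)
  · rw [hi3]
    intro h
    have := (hpos x hx).2
    rw [h] at this
    exact lt_irrefl _ this
  · intro y hy hy0
    rw [hi2] at hy0
    exact hmono.injOn hy hx (by
      rw [hy0]; exact hx0.symm)
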